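/- Let (G, u) be a strongly semisimple unital ℓ-group, let h₁, …, hₙ ∈ G, and for each i let Zᵢ be the set of maximal ℓ-ideals of G containing hᵢ. Suppose g₁, …, gₙ ∈ G satisfy gᵢ - gⱼ ∈ m for all i, j and all m ∈ Zᵢ ∩ Zⱼ, and suppose moreover that every maximal ℓ-ideal of G belongs to Z₁ ∪ … ∪ Zₙ. Then there exists a unique g ∈ G such that g - gᵢ ∈ m for each i ∈ {1, …, n} and each m ∈ Zᵢ. (Main Theorem, uniqueness part.) -/

import Mathlib

/-- An ℓ-ideal of an ℓ-group `G`: an additive subgroup `I` such that `g ∈ I`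
whenever `|g| ≤ |h|` for some `h ∈ I`. -/
def IsLIdeal {G : Type*} [Lattice G] [AddCommGroup G]
    [CovariantClass G G (· + ·) (· ≤ ·)] (I : AddSubgroup G) : Prop :=
  ∀ ⦃g h : G⦄, h ∈ I → |g| ≤ |h| → g ∈ I

/-- The ℓ-ideal generated by a subset `S` of `G`: the smallest ℓ-ideal containing `S`. -/
def lIdealGen {G : Type*} [Lattice G] [AddCommGroup G]
    [CovariantClass G G (· + ·) (· ≤ ·)] (S : Set G) : AddSubgroup G :=
  sInf {I : AddSubgroup G | IsLIdeal I ∧ S ⊆ ↑I}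

/-- A prime ℓ-ideal: a proper ℓ-ideal `p` such that `a ⊓ b = 0` implies `a ∈ p` or `b ∈ p`. -/
def IsPrimeLIdeal {G : Type*} [Lattice G] [AddCommGroup G]
    [CovariantClass G G (· + ·) (· ≤ ·)] (p : AddSubgroup G) : Prop :=
  IsLIdeal p ∧ p ≠ ⊤ ∧ ∀ a b : G, a ⊓ b = 0 → a ∈ p ∨ b ∈ p

/-- A maximal ℓ-ideal: a proper ℓ-ideal maximal under inclusion among proper ℓ-ideals. -/
def IsMaximalLIdeal {G : Type*} [Lattice G] [AddCommGroup G]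
    [CovariantClass G G (· + ·) (· ≤ ·)] (m : AddSubgroup G) : Prop :=
  IsLIdeal m ∧ m ≠ ⊤ ∧ ∀ I : AddSubgroup G, IsLIdeal I → I ≠ ⊤ → m ≤ I → I = m

/-- A (strong order) unit of `G`. -/
def IsStrongUnit {G : Type*} [Lattice G] [AddCommGroup G]
    [CovariantClass G G (· + ·) (· ≤ ·)] (u : G) : Prop :=
  0 ≤ u ∧ ∀ g : G, ∃ n : ℕ, g ≤ n • u

/-- `G` is strongly semisimple: for every `h ∈ G`, the intersection of all maximal
ℓ-ideals containing `h` equals the principal ℓ-ideal generated by `h`. -/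
def IsStronglySemisimple (G : Type*) [Lattice G] [AddCommGroup G]
    [CovariantClass G G (· + ·) (· ≤ ·)] : Prop :=
  ∀ h : G, sInf {m : AddSubgroup G | IsMaximalLIdeal m ∧ h ∈ m} = lIdealGen {h}

/-!
By Riesz decomposition, ℓ-ideals form a distributive lattice whose joins are sums of subgroups, so
the Chinese remainder theorem holds for finite families of ℓ-ideals. Strong semisimplicity at
`|h i| + |h j|` turns compatibility at the maximal ℓ-ideals in `Z i ∩ Z j` into congruence of `g i`
and `g j` modulo `⟨h i⟩ + ⟨h j⟩`, which is what the remainder theorem needs. Strong semisimplicity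
at `0` says that the maximal ℓ-ideals intersect in `0`, whence uniqueness.
-/

section

variable {G : Type*} [Lattice G] [AddCommGroup G] [CovariantClass G G (· + ·) (· ≤ ·)]

theorem exists_abs_le_and_abs_sub_le {x p q : G} (hp : 0 ≤ p) (hq : 0 ≤ q) (hx : |x| ≤ p + q) :
    ∃ y, |y| ≤ p ∧ |x - y| ≤ q := by
  obtain ⟨hx_le, hx_neg_le⟩ := abs_le'.1 hx
  -- truncate `x` to the interval `[-p, p]`
  refine ⟨(x ⊓ p) ⊔ -p, abs_le'.2 ⟨sup_le inf_le_right (neg_le_self hp), ?_⟩,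
    abs_le'.2 ⟨?_, ?_⟩⟩
  · exact neg_le.1 le_sup_right
  · have hx_inf : x - q ≤ x ⊓ p := le_inf (sub_le_self x hq) (sub_le_iff_le_add.2 hx_le)
    exact sub_le_comm.1 (hx_inf.trans le_sup_left)
  · have hx_add : -p ≤ q + x := sub_le_iff_le_add'.1 (neg_add' p q ▸ neg_le.1 hx_neg_le)
    rw [neg_sub, sub_le_iff_le_add]
    exact sup_le (inf_le_left.trans (le_add_of_nonneg_left hq)) hx_add

namespace IsLIdeal

variable {I J K : AddSubgroup G}

theorem abs_mem (hI : IsLIdeal I) {x : G} (hx : x ∈ I) : |x| ∈ I :=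
  hI hx (abs_abs x).le

theorem mem_of_abs_le (hI : IsLIdeal I) {x y : G} (hy : y ∈ I) (hxy : |x| ≤ y) : x ∈ I :=
  hI hy (hxy.trans (le_abs_self y))

theorem abs_add_abs_mem_iff (hI : IsLIdeal I) {x y : G} : |x| + |y| ∈ I ↔ x ∈ I ∧ y ∈ I :=
  ⟨fun h => ⟨hI.mem_of_abs_le h (le_add_of_nonneg_right (abs_nonneg y)),
    hI.mem_of_abs_le h (le_add_of_nonneg_left (abs_nonneg x))⟩,
    fun h => I.add_mem (hI.abs_mem h.1) (hI.abs_mem h.2)⟩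

theorem bot : IsLIdeal (⊥ : AddSubgroup G) := by
  rintro x _ rfl hx
  exact le_antisymm ((le_abs_self x).trans (by simpa using hx))
    (neg_nonpos.1 ((neg_le_abs x).trans (by simpa using hx)))

theorem sInf {S : Set (AddSubgroup G)} (hS : ∀ I ∈ S, IsLIdeal I) : IsLIdeal (sInf S) :=
  fun _ _ hy hxy => AddSubgroup.mem_sInf.2 fun I hI =>
    hS I hI (AddSubgroup.mem_sInf.1 hy I hI) hxy

theorem iInf {ι : Sort*} {I : ι → AddSubgroup G} (hI : ∀ i, IsLIdeal (I i)) :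
    IsLIdeal (⨅ i, I i) :=
  sInf (Set.forall_mem_range.2 hI)

theorem inf (hI : IsLIdeal I) (hJ : IsLIdeal J) : IsLIdeal (I ⊓ J) :=
  fun _ _ hy hxy => ⟨hI hy.1 hxy, hJ hy.2 hxy⟩

theorem mem_sup_of_abs_le_add (hI : IsLIdeal I) (hJ : IsLIdeal J) {x a b : G} (ha : a ∈ I)
    (hb : b ∈ J) (hx : |x| ≤ a + b) : x ∈ I ⊔ J := by
  obtain ⟨y, hya, hyb⟩ := exists_abs_le_and_abs_sub_le (abs_nonneg a) (abs_nonneg b)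
    (hx.trans (add_le_add (le_abs_self a) (le_abs_self b)))
  exact AddSubgroup.mem_sup.2 ⟨y, hI ha hya, x - y, hJ hb hyb, add_sub_cancel y x⟩

theorem sup (hI : IsLIdeal I) (hJ : IsLIdeal J) : IsLIdeal (I ⊔ J) := by
  intro x y hy hxy
  obtain ⟨a, ha, b, hb, rfl⟩ := AddSubgroup.mem_sup.1 hy
  exact hI.mem_sup_of_abs_le_add hJ (hI.abs_mem ha) (hJ.abs_mem hb) (hxy.trans (abs_add_le a b))

theorem sup_inf_sup_le (hI : IsLIdeal I) (hJ : IsLIdeal J) (hK : IsLIdeal K) :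
    (I ⊔ K) ⊓ (J ⊔ K) ≤ (I ⊓ J) ⊔ K := by
  rintro x ⟨hxI, hxJ⟩
  obtain ⟨a, ha, c, hc, rfl⟩ := AddSubgroup.mem_sup.1 hxI
  obtain ⟨b, hb, d, hd, hbd⟩ := AddSubgroup.mem_sup.1 hxJ
  have hab : |a| ⊓ |b| ∈ I ⊓ J := by
    have hab₀ : |(|a| ⊓ |b|)| = |a| ⊓ |b| := abs_of_nonneg (le_inf (abs_nonneg a) (abs_nonneg b))
    exact ⟨hI ha (hab₀.trans_le inf_le_left), hJ hb (hab₀.trans_le inf_le_right)⟩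
  have hcd : |c| + |d| ∈ K := K.add_mem (hK.abs_mem hc) (hK.abs_mem hd)
  refine (hI.inf hJ).mem_sup_of_abs_le_add hK hab hcd ?_
  rw [inf_add]
  refine le_inf ?_ ?_
  · calc |a + c| ≤ |a| + |c| := abs_add_le a c
      _ ≤ |a| + (|c| + |d|) := by gcongr; exact le_add_of_nonneg_right (abs_nonneg d)
  · calc |a + c| = |b + d| := by rw [hbd]
      _ ≤ |b| + |d| := abs_add_le b d
      _ ≤ |b| + (|c| + |d|) := by gcongr; exact le_add_of_nonneg_left (abs_nonneg c)

theorem biInf_finset_sup_le {ι : Type*} {I : ι → AddSubgroup G} {s : Finset ι}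
    (hI : ∀ i ∈ s, IsLIdeal (I i)) (hK : IsLIdeal K) :
    ⨅ i ∈ s, (I i ⊔ K) ≤ (⨅ i ∈ s, I i) ⊔ K := by
  classical
  induction s using Finset.induction_on with
  | empty => simp
  | insert k s _ ih =>
    obtain ⟨hIk, hIs⟩ := (Finset.forall_mem_insert ..).1 hI
    simp only [Finset.iInf_insert]
    exact (inf_le_inf_left _ (ih hIs)).trans
      (hIk.sup_inf_sup_le (iInf fun i => iInf (hIs i)) hK)

theorem exists_forall_mem_finset_sub_mem {ι : Type*} {I : ι → AddSubgroup G} {s : Finset ι}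
    (hI : ∀ i ∈ s, IsLIdeal (I i)) {g : ι → G} (hg : ∀ i ∈ s, ∀ j ∈ s, g i - g j ∈ I i ⊔ I j) :
    ∃ f, ∀ i ∈ s, f - g i ∈ I i := by
  classical
  induction s using Finset.induction_on with
  | empty => exact ⟨0, by simp⟩
  | insert k s _ ih =>
    obtain ⟨hIk, hIs⟩ := (Finset.forall_mem_insert ..).1 hI
    obtain ⟨f, hf⟩ := ih hIs fun i hi j hj =>
      hg i (Finset.mem_insert_of_mem hi) j (Finset.mem_insert_of_mem hj)
    have hfk_sup (i : ι) (hi : i ∈ s) : f - g k ∈ I i ⊔ I k := by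
      rw [← sub_add_sub_cancel f (g i) (g k)]
      exact add_mem (AddSubgroup.mem_sup_left (hf i hi))
        (hg i (Finset.mem_insert_of_mem hi) k (Finset.mem_insert_self k s))
    have hfk : f - g k ∈ (⨅ i ∈ s, I i) ⊔ I k := by
      refine biInf_finset_sup_le hIs hIk ?_
      simpa only [AddSubgroup.mem_iInf] using hfk_sup
    obtain ⟨a, ha, b, hb, hab⟩ := AddSubgroup.mem_sup.1 hfk
    refine ⟨f - a, (Finset.forall_mem_insert ..).2 ⟨?_, fun i hi => ?_⟩⟩
    · rwa [sub_right_comm, ← hab, add_sub_cancel_left]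
    · rw [sub_right_comm]
      exact sub_mem (hf i hi) (iInf₂_le (f := fun i _ => I i) i hi ha)

theorem exists_forall_sub_mem {ι : Type*} [Finite ι] {I : ι → AddSubgroup G}
    (hI : ∀ i, IsLIdeal (I i)) {g : ι → G} (hg : ∀ i j, g i - g j ∈ I i ⊔ I j) :
    ∃ f, ∀ i, f - g i ∈ I i := by
  cases nonempty_fintype ι
  simpa only [Finset.mem_univ, forall_const] using
    exists_forall_mem_finset_sub_mem (s := Finset.univ) (fun i _ => hI i) fun i _ j _ => hg i j

end IsLIdeal

theorem isLIdeal_lIdealGen (S : Set G) : IsLIdeal (lIdealGen S) :=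
  IsLIdeal.sInf fun _ hI => hI.1

theorem subset_lIdealGen (S : Set G) : S ⊆ lIdealGen S :=
  fun _ hx => AddSubgroup.mem_sInf.2 fun _ hI => hI.2 hx

theorem lIdealGen_le {S : Set G} {I : AddSubgroup G} (hI : IsLIdeal I) (hS : S ⊆ I) :
    lIdealGen S ≤ I :=
  sInf_le ⟨hI, hS⟩

theorem lIdealGen_singleton_zero : lIdealGen {(0 : G)} = ⊥ :=
  le_bot_iff.1 (lIdealGen_le .bot (by simp))

theorem lIdealGen_abs_add_abs_le (a b : G) :
    lIdealGen {|a| + |b|} ≤ lIdealGen {a} ⊔ lIdealGen {b} := by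
  have hsup : IsLIdeal (lIdealGen {a} ⊔ lIdealGen {b}) :=
    (isLIdeal_lIdealGen _).sup (isLIdeal_lIdealGen _)
  refine lIdealGen_le hsup (Set.singleton_subset_iff.2 (hsup.abs_add_abs_mem_iff.2 ⟨?_, ?_⟩))
  · exact AddSubgroup.mem_sup_left (subset_lIdealGen {a} rfl)
  · exact AddSubgroup.mem_sup_right (subset_lIdealGen {b} rfl)

namespace IsStronglySemisimple

theorem mem_lIdealGen (hG : IsStronglySemisimple G) {a x : G}
    (hx : ∀ m, IsMaximalLIdeal m → a ∈ m → x ∈ m) : x ∈ lIdealGen {a} := by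
  rw [← hG a]
  exact AddSubgroup.mem_sInf.2 fun m hm => hx m hm.1 hm.2

theorem mem_lIdealGen_sup (hG : IsStronglySemisimple G) {a b x : G}
    (hx : ∀ m, IsMaximalLIdeal m → a ∈ m → b ∈ m → x ∈ m) :
    x ∈ lIdealGen {a} ⊔ lIdealGen {b} :=
  lIdealGen_abs_add_abs_le a b <| hG.mem_lIdealGen fun m hm hab =>
    let ⟨ha, hb⟩ := hm.1.abs_add_abs_mem_iff.1 hab
    hx m hm ha hb

theorem eq_zero_of_forall_mem (hG : IsStronglySemisimple G) {x : G}
    (hx : ∀ m, IsMaximalLIdeal m → x ∈ m) : x = 0 := by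
  rw [← AddSubgroup.mem_bot, ← lIdealGen_singleton_zero]
  exact hG.mem_lIdealGen fun m hm _ => hx m hm

theorem exists_forall_sub_mem (hG : IsStronglySemisimple G) {ι : Type*} [Finite ι] {h g : ι → G}
    (hcomp : ∀ i j, ∀ m : AddSubgroup G, IsMaximalLIdeal m →
      h i ∈ m → h j ∈ m → g i - g j ∈ m) :
    ∃ f, ∀ i, ∀ m : AddSubgroup G, IsMaximalLIdeal m → h i ∈ m → f - g i ∈ m := by
  obtain ⟨f, hf⟩ := IsLIdeal.exists_forall_sub_mem (fun i => isLIdeal_lIdealGen {h i})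
    fun i j => hG.mem_lIdealGen_sup (hcomp i j)
  exact ⟨f, fun i m hm hi => lIdealGen_le hm.1 (Set.singleton_subset_iff.2 hi) (hf i)⟩

end IsStronglySemisimple

end

theorem main_theorem_unique_general {G : Type*} [Lattice G] [AddCommGroup G]
    [CovariantClass G G (· + ·) (· ≤ ·)] (hss : IsStronglySemisimple G)
    {ι : Type*} [Finite ι] (h g : ι → G)
    (hcomp : ∀ i j, ∀ m : AddSubgroup G, IsMaximalLIdeal m →
      h i ∈ m → h j ∈ m → g i - g j ∈ m)
    (hcover : ∀ m : AddSubgroup G, IsMaximalLIdeal m → ∃ i, h i ∈ m) :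
    ∃! g' : G, ∀ i, ∀ m : AddSubgroup G, IsMaximalLIdeal m → h i ∈ m → g' - g i ∈ m := by
  obtain ⟨f, hf⟩ := hss.exists_forall_sub_mem hcomp
  refine ⟨f, hf, fun f' hf' => sub_eq_zero.1 (hss.eq_zero_of_forall_mem fun m hm => ?_)⟩
  obtain ⟨i, hi⟩ := hcover m hm
  simpa only [sub_sub_sub_cancel_right] using m.sub_mem (hf' i m hm hi) (hf i m hm hi)

/-- **Main Theorem (with uniqueness).** If moreover the zero sets `Z i` cover
all maximal ℓ-ideals, the patched element is unique. -/
theorem main_theorem_unique {G : Type*} [Lattice G] [AddCommGroup G]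
    [CovariantClass G G (· + ·) (· ≤ ·)] (u : G) (hu : IsStrongUnit u)
    (hss : IsStronglySemisimple G) {n : ℕ} (h g : Fin n → G)
    (hcomp : ∀ i j, ∀ m : AddSubgroup G, IsMaximalLIdeal m →
      h i ∈ m → h j ∈ m → g i - g j ∈ m)
    (hcover : ∀ m : AddSubgroup G, IsMaximalLIdeal m → ∃ i, h i ∈ m) :
    ∃! g' : G, ∀ i, ∀ m : AddSubgroup G, IsMaximalLIdeal m → h i ∈ m → g' - g i ∈ m :=
  main_theorem_unique_general hss h g hcomp hcover
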